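/- Pointwise uniqueness for jointly C-compatible solutions is equivalent to pointwise uniqueness in S_{Γ,C,ν}: if for every triple (X1, X2, Y) on a common probability space with μ_{X1,Y}, μ_{X2,Y} ∈ S_{Γ,C,ν} and (X1,X2) jointly C-compatible with Y one has X1 = X2 a.s., then the same conclusion holds for every triple (X1,X2,Y) with μ_{X1,Y}, μ_{X2,Y} ∈ S_{Γ,C,ν} (without assuming joint compatibility), and conversely. -/

import Mathlib

open MeasureTheory ProbabilityTheory MeasurableSpace

/-- `X` is `C`-compatible with `Y` (at every index `α`). -/
def CompatiblePair {S1 S2 Ω A : Type} [mS1 : MeasurableSpace S1] [mS2 : MeasurableSpace S2]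
    [MeasurableSpace Ω] (P : Measure Ω)
    (B1 : A → MeasurableSpace S1) (B2 : A → MeasurableSpace S2)
    (X : Ω → S1) (Y : Ω → S2) : Prop :=
  ∀ (α : A) (h : S2 → ℝ), Measurable h → (∃ C, ∀ x, |h x| ≤ C) →
    P[fun ω => h (Y ω)|MeasurableSpace.comap X (B1 α) ⊔ MeasurableSpace.comap Y (B2 α)]
      =ᵐ[P] P[fun ω => h (Y ω)|MeasurableSpace.comap Y (B2 α)]

/-- `(X1, X2)` are jointly `C`-compatible with `Y`. -/
def JointlyCompatible {S1 S2 Ω A : Type} [mS1 : MeasurableSpace S1] [mS2 : MeasurableSpace S2]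
    [MeasurableSpace Ω] (P : Measure Ω)
    (B1 : A → MeasurableSpace S1) (B2 : A → MeasurableSpace S2)
    (X1 X2 : Ω → S1) (Y : Ω → S2) : Prop :=
  ∀ (α : A) (h : S2 → ℝ), Measurable h → (∃ C, ∀ x, |h x| ≤ C) →
    P[fun ω => h (Y ω)|MeasurableSpace.comap X1 (B1 α) ⊔ MeasurableSpace.comap X2 (B1 α)
        ⊔ MeasurableSpace.comap Y (B2 α)]
      =ᵐ[P] P[fun ω => h (Y ω)|MeasurableSpace.comap Y (B2 α)]

theorem aux_condExp_comp {Ω T : Type} (m : MeasurableSpace T) [mΩ : MeasurableSpace Ω] [mT : MeasurableSpace T]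
    (P : Measure Ω) [IsProbabilityMeasure P] (ν : Measure T) [IsProbabilityMeasure ν]
    (Y : Ω → T) (hY : Measurable Y) (hν : P.map Y = ν) (hm : m ≤ mT)
    (h : T → ℝ) (hh : Integrable h ν) :
    (fun ω => (ν[h|m]) (Y ω)) =ᵐ[P] P[fun ω => h (Y ω)|MeasurableSpace.comap Y m] := by
  subst hν
  have hle : MeasurableSpace.comap Y m ≤ mΩ :=
    (MeasurableSpace.comap_mono hm).trans hY.comap_le
  have hi : Integrable (fun ω => ((P.map Y)[h|m]) (Y ω)) P :=
    (integrable_condExp (μ := P.map Y) (m := m) (f := h)).comp_measurable hY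
  refine ae_eq_condExp_of_forall_setIntegral_eq hle (hh.comp_measurable hY)
    (fun s _ _ => hi.integrableOn) ?_ ?_
  · rintro s ⟨t, ht, rfl⟩ -
    rw [← setIntegral_map (hm t ht) integrable_condExp.aestronglyMeasurable hY.aemeasurable,
      ← setIntegral_map (hm t ht) hh.aestronglyMeasurable hY.aemeasurable,
      setIntegral_condExp hm hh ht]
  · refine StronglyMeasurable.aestronglyMeasurable ?_
    exact (stronglyMeasurable_condExp (m := m)).comp_measurable
      (comap_measurable Y)

theorem aux_integral {T U : Type} [MeasurableSpace T] [MeasurableSpace U]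
    (ν : Measure T) [IsProbabilityMeasure ν] (κ : Kernel T U) [IsMarkovKernel κ]
    (k : T → ℝ) (hk : Integrable k ν) {D : Set T} {E : Set U} (hD : MeasurableSet D)
    (hE : MeasurableSet E) :
    ∫ p in D ×ˢ E, k p.1 ∂(ν ⊗ₘ κ) = ∫ y in D, (κ y).real E * k y ∂ν := by
  have hi : Integrable (fun p : T × U => k p.1) (ν ⊗ₘ κ) := by
    have : Integrable k ((ν ⊗ₘ κ).map Prod.fst) := by
      have := Measure.fst_compProd ν κ
      rw [Measure.fst] at this
      rwa [this]
    exact this.comp_measurable measurable_fst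
  rw [Measure.setIntegral_compProd hD hE hi.integrableOn]
  simp

theorem aux_bdd {T U : Type} [MeasurableSpace T] [MeasurableSpace U]
    (ν : Measure T) (κ : Kernel T U) [IsMarkovKernel κ]
    (k : T → ℝ) (hk : Integrable k ν) {E : Set U} (hE : MeasurableSet E) :
    Integrable (fun y => (κ y).real E * k y) ν := by
  refine hk.bdd_mul (c := 1) ?_ ?_
  · exact (κ.measurable_coe hE).ennreal_toReal.aestronglyMeasurable
  · filter_upwards with y
    rw [Real.norm_eq_abs, abs_of_nonneg measureReal_nonneg]
    exact measureReal_le_one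

theorem aux_compat {S1 S2 A : Type} [mS1 : MeasurableSpace S1] [mS2 : MeasurableSpace S2]
    (ν : Measure S2) [IsProbabilityMeasure ν]
    (B1 : A → MeasurableSpace S1) (hB1 : ∀ α, B1 α ≤ mS1)
    (B2 : A → MeasurableSpace S2) (hB2 : ∀ α, B2 α ≤ mS2)
    (μ : Measure (S1 × S2)) [IsProbabilityMeasure μ] (hν : μ.map Prod.snd = ν)
    (hc : CompatiblePair μ B1 B2 (Prod.fst : S1 × S2 → S1) (Prod.snd : S1 × S2 → S2))
    (κ : Kernel S2 S1) [IsMarkovKernel κ] (hκ : μ.map Prod.swap = ν ⊗ₘ κ)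
    (α : A) (E : Set S1) (hE : MeasurableSet[B1 α] E) :
    (fun y => (κ y).real E) =ᵐ[ν] ν[fun y => (κ y).real E|B2 α] := by
  have hE' := hB1 α E hE
  have key : ∀ k : S2 → ℝ, Integrable k ν →
      ∫ p in Prod.fst ⁻¹' E, k p.2 ∂μ = ∫ y, (κ y).real E * k y ∂ν := by
    intro k hk
    have h1 := aux_integral ν κ k hk MeasurableSet.univ hE'
    rw [← hκ, setIntegral_map (MeasurableSet.univ.prod hE') _ measurable_swap.aemeasurable,
      setIntegral_univ] at h1
    · rw [← h1]
      congr 2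
      ext p; simp
    · rw [hκ]
      have : Integrable k ((ν ⊗ₘ κ).map Prod.fst) := by
        have := Measure.fst_compProd ν κ
        rw [Measure.fst] at this
        rwa [this]
      exact (this.comp_measurable measurable_fst).aestronglyMeasurable
  have hφm : Measurable (fun y => (κ y).real E) := (κ.measurable_coe hE').ennreal_toReal
  have hφ : Integrable (fun y => (κ y).real E) ν := by
    simpa using aux_bdd ν κ (fun _ => (1 : ℝ)) (integrable_const _) hE'
  refine Integrable.ae_eq_of_forall_setIntegral_eq _ _ hφ integrable_condExp ?_
  intro T hT _
  set g : S2 → ℝ := T.indicator (fun _ => (1 : ℝ)) with hg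
  have hgm : Measurable g := measurable_const.indicator hT
  have hgb : ∀ x, |g x| ≤ 1 := fun x => by
    by_cases hx : x ∈ T <;> simp [hg, hx]
  have hgi : Integrable g ν := (integrable_const _).indicator hT
  have hle : MeasurableSpace.comap (Prod.fst : S1 × S2 → S1) (B1 α) ⊔
      MeasurableSpace.comap (Prod.snd : S1 × S2 → S2) (B2 α) ≤ Prod.instMeasurableSpace :=
    sup_le ((MeasurableSpace.comap_mono (hB1 α)).trans measurable_fst.comap_le)
      ((MeasurableSpace.comap_mono (hB2 α)).trans measurable_snd.comap_le)
  have e1 : ∫ y, (κ y).real E * g y ∂ν = ∫ y, (κ y).real E * (ν[g|B2 α]) y ∂ν := by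
    rw [← key g hgi, ← key _ integrable_condExp]
    have hgi2 : Integrable (fun p : S1 × S2 => g p.2) μ := by
      rw [← hν] at hgi
      exact hgi.comp_measurable measurable_snd
    rw [← setIntegral_condExp hle hgi2 (s := Prod.fst ⁻¹' E)]
    · refine integral_congr_ae (ae_restrict_of_ae ?_)
      exact (hc α g hgm ⟨1, hgb⟩).trans
        (aux_condExp_comp (B2 α) μ ν Prod.snd measurable_snd hν (hB2 α) g hgi).symm
    · exact (le_sup_left (a := MeasurableSpace.comap (Prod.fst : S1 × S2 → S1) (B1 α)) :
        _ ≤ _) _ ⟨E, hE, rfl⟩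
  have e2 : ∫ y, (κ y).real E * (ν[g|B2 α]) y ∂ν
      = ∫ y, (ν[fun y => (κ y).real E|B2 α]) y * (ν[g|B2 α]) y ∂ν := by
    rw [← integral_condExp (hB2 α) (f := fun y => (κ y).real E * (ν[g|B2 α]) y)]
    exact integral_congr_ae (condExp_mul_of_stronglyMeasurable_right
      (stronglyMeasurable_condExp) (aux_bdd ν κ _ integrable_condExp hE') hφ)
  have hmul : Integrable (fun y => (ν[fun y => (κ y).real E|B2 α]) y * g y) ν := by
    refine (integrable_condExp (μ := ν) (m := B2 α)).mul_bdd (c := 1)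
      hgm.aestronglyMeasurable ?_
    exact Filter.Eventually.of_forall hgb
  have e3 : ∫ y, (ν[fun y => (κ y).real E|B2 α]) y * g y ∂ν
      = ∫ y, (ν[fun y => (κ y).real E|B2 α]) y * (ν[g|B2 α]) y ∂ν := by
    rw [← integral_condExp (hB2 α)
      (f := fun y => (ν[fun y => (κ y).real E|B2 α]) y * g y)]
    exact integral_congr_ae (condExp_mul_of_stronglyMeasurable_left
      (stronglyMeasurable_condExp) hmul hgi)
  have conv : ∀ f : S2 → ℝ, ∫ y in T, f y ∂ν = ∫ y, f y * g y ∂ν := by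
    intro f
    rw [← integral_indicator hT]
    congr 1
    ext y
    by_cases hy : y ∈ T <;> simp [hg, hy]
  rw [conv, conv, e1, e2, e3]

theorem aux_pi {Ω : Type} [mΩ : MeasurableSpace Ω] (P : Measure Ω) [IsProbabilityMeasure P]
    (f g : Ω → ℝ) (hf : Integrable f P) (hg : Integrable g P) (m : MeasurableSpace Ω)
    (hm : m ≤ mΩ) (C : Set (Set Ω)) (hC : IsPiSystem C) (hmC : m = generateFrom C)
    (hu : Set.univ ∈ C) (h : ∀ s ∈ C, ∫ x in s, f x ∂P = ∫ x in s, g x ∂P)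
    (s : Set Ω) (hs : MeasurableSet[m] s) : ∫ x in s, f x ∂P = ∫ x in s, g x ∂P := by
  induction s, hs using MeasurableSpace.induction_on_inter hmC hC with
  | empty => simp
  | basic t ht => exact h t ht
  | compl t ht ih =>
    have h0 := h _ hu
    simp only [setIntegral_univ] at h0
    have a := integral_add_compl (hm t ht) hf
    have b := integral_add_compl (hm t ht) hg
    linarith
  | iUnion F hd hF ih =>
    rw [integral_iUnion (fun i => hm _ (hF i)) hd hf.integrableOn,
      integral_iUnion (fun i => hm _ (hF i)) hd hg.integrableOn]
    simp_rw [ih]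

theorem aux_joint {S1 S2 A : Type} [mS1 : MeasurableSpace S1] [mS2 : MeasurableSpace S2]
    (ν : Measure S2) [IsProbabilityMeasure ν]
    (B1 : A → MeasurableSpace S1) (hB1 : ∀ α, B1 α ≤ mS1)
    (B2 : A → MeasurableSpace S2) (hB2 : ∀ α, B2 α ≤ mS2)
    (κ1 κ2 : Kernel S2 S1) [IsMarkovKernel κ1] [IsMarkovKernel κ2]
    (h1 : ∀ (α : A) (E : Set S1), MeasurableSet[B1 α] E →
      (fun y => (κ1 y).real E) =ᵐ[ν] ν[fun y => (κ1 y).real E|B2 α])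
    (h2 : ∀ (α : A) (E : Set S1), MeasurableSet[B1 α] E →
      (fun y => (κ2 y).real E) =ᵐ[ν] ν[fun y => (κ2 y).real E|B2 α]) :
    JointlyCompatible (ν ⊗ₘ (κ1 ×ₖ κ2)) B1 B2 (fun p : S2 × S1 × S1 => p.2.1)
      (fun p => p.2.2) (fun p => p.1) := by
  intro α h hhm hhb
  obtain ⟨c, hc⟩ := hhb
  have hhi : Integrable h ν := Integrable.of_bound hhm.aestronglyMeasurable c
    (Filter.Eventually.of_forall hc)
  set P := ν ⊗ₘ (κ1 ×ₖ κ2) with hP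
  have hPfst : P.map Prod.fst = ν := Measure.fst_compProd ν _
  have hX1 : Measurable (fun p : S2 × S1 × S1 => p.2.1) := by fun_prop
  have hX2 : Measurable (fun p : S2 × S1 × S1 => p.2.2) := by fun_prop
  have hY : Measurable (fun p : S2 × S1 × S1 => p.1) := by fun_prop
  set k := ν[h|B2 α] with hk
  have hki : Integrable k ν := integrable_condExp
  have hint : ∀ f : S2 → ℝ, Integrable f ν →
      Integrable (fun p : S2 × S1 × S1 => f p.1) P := by
    intro f hf
    rw [← hPfst] at hf
    exact hf.comp_measurable measurable_fst
  have hcomp := aux_condExp_comp (B2 α) P ν (fun p : S2 × S1 × S1 => p.1) hY hPfst (hB2 α) h hhi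
  refine Filter.EventuallyEq.symm (hcomp.symm.trans ?_)
  set m := MeasurableSpace.comap (fun p : S2 × S1 × S1 => p.2.1) (B1 α) ⊔
    MeasurableSpace.comap (fun p : S2 × S1 × S1 => p.2.2) (B1 α) ⊔
    MeasurableSpace.comap (fun p : S2 × S1 × S1 => p.1) (B2 α) with hmdef
  have hm : m ≤ Prod.instMeasurableSpace :=
    sup_le (sup_le ((MeasurableSpace.comap_mono (hB1 α)).trans hX1.comap_le)
      ((MeasurableSpace.comap_mono (hB1 α)).trans hX2.comap_le))
      ((MeasurableSpace.comap_mono (hB2 α)).trans hY.comap_le)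
  refine ae_eq_condExp_of_forall_setIntegral_eq hm (hint h hhi)
    (fun s _ _ => (hint k hki).integrableOn) ?_ ?_
  swap
  · refine StronglyMeasurable.aestronglyMeasurable ?_
    refine (stronglyMeasurable_condExp (m := B2 α)).comp_measurable ?_
    exact (comap_measurable (m := B2 α) (fun p : S2 × S1 × S1 => p.1)).mono le_sup_right le_rfl
  intro s hs _
  refine aux_pi (mΩ := Prod.instMeasurableSpace) P _ _ (hint k hki) (hint h hhi) m hm
    {s | ∃ D E1 E2, MeasurableSet[B2 α] D ∧ MeasurableSet[B1 α] E1 ∧ MeasurableSet[B1 α] E2 ∧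
      s = D ×ˢ (E1 ×ˢ E2)} ?_ ?_ ?_ ?_ s hs
  · rintro _ ⟨D, E1, E2, hD, hE1, hE2, rfl⟩ _ ⟨D', E1', E2', hD', hE1', hE2', rfl⟩ -
    refine ⟨D ∩ D', E1 ∩ E1', E2 ∩ E2', ?_, ?_, ?_, ?_⟩
    · exact @MeasurableSet.inter _ (B2 α) _ _ hD hD'
    · exact @MeasurableSet.inter _ (B1 α) _ _ hE1 hE1'
    · exact @MeasurableSet.inter _ (B1 α) _ _ hE2 hE2'
    · rw [Set.prod_inter_prod, Set.prod_inter_prod]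
  · have u1 := @MeasurableSet.univ _ (B1 α)
    have u2 := @MeasurableSet.univ _ (B2 α)
    apply le_antisymm
    · refine sup_le (sup_le ?_ ?_) ?_
      · rintro _ ⟨E, hE, rfl⟩
        exact measurableSet_generateFrom ⟨Set.univ, E, Set.univ, u2, hE, u1, by ext; simp⟩
      · rintro _ ⟨E, hE, rfl⟩
        exact measurableSet_generateFrom ⟨Set.univ, Set.univ, E, u2, u1, hE, by ext; simp⟩
      · rintro _ ⟨E, hE, rfl⟩
        exact measurableSet_generateFrom ⟨E, Set.univ, Set.univ, hE, u1, u1, by ext; simp⟩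
    · refine generateFrom_le ?_
      rintro _ ⟨D, E1, E2, hD, hE1, hE2, rfl⟩
      have a1 : MeasurableSet[m] ((fun p : S2 × S1 × S1 => p.2.1) ⁻¹' E1) :=
        (le_sup_left.trans le_sup_left : _ ≤ m) _ ⟨E1, hE1, rfl⟩
      have a2 : MeasurableSet[m] ((fun p : S2 × S1 × S1 => p.2.2) ⁻¹' E2) :=
        (le_sup_right.trans le_sup_left : _ ≤ m) _ ⟨E2, hE2, rfl⟩
      have a3 : MeasurableSet[m] ((fun p : S2 × S1 × S1 => p.1) ⁻¹' D) :=
        (le_sup_right : _ ≤ m) _ ⟨D, hD, rfl⟩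
      exact @MeasurableSet.inter _ m _ _ a3 (@MeasurableSet.inter _ m _ _ a1 a2)
  · exact ⟨Set.univ, Set.univ, Set.univ, @MeasurableSet.univ _ (B2 α), @MeasurableSet.univ _ (B1 α),
      @MeasurableSet.univ _ (B1 α), by simp⟩
  rintro _ ⟨D, E1, E2, hD, hE1, hE2, rfl⟩
  have mD := hB2 α D hD
  have mE1 := hB1 α E1 hE1
  have mE2 := hB1 α E2 hE2
  rw [hP, aux_integral ν _ k hki mD (mE1.prod mE2), aux_integral ν _ h hhi mD (mE1.prod mE2)]
  set G : S2 → ℝ := (ν[fun y => (κ1 y).real E1|B2 α]) * (ν[fun y => (κ2 y).real E2|B2 α]) with hG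
  have hGm : StronglyMeasurable[B2 α] G := stronglyMeasurable_condExp.mul stronglyMeasurable_condExp
  have hGe : (fun y => ((κ1 ×ₖ κ2) y).real (E1 ×ˢ E2)) =ᵐ[ν] G := by
    filter_upwards [h1 α E1 hE1, h2 α E2 hE2] with y hy1 hy2
    rw [hG, Pi.mul_apply, ← hy1, ← hy2, measureReal_def, Kernel.prod_apply_prod, ENNReal.toReal_mul]
    rfl
  have cv : ∀ f : S2 → ℝ, ∫ y in D, ((κ1 ×ₖ κ2) y).real (E1 ×ˢ E2) * f y ∂ν
      = ∫ y in D, (G * f) y ∂ν := by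
    intro f
    refine integral_congr_ae (ae_restrict_of_ae ?_)
    filter_upwards [hGe] with y hy
    rw [Pi.mul_apply, hy]
  have hGh : Integrable (G * h) ν := by
    refine (aux_bdd ν (κ1 ×ₖ κ2) h hhi (mE1.prod mE2)).congr ?_
    filter_upwards [hGe] with y hy
    rw [Pi.mul_apply, hy]
  rw [cv, cv, ← setIntegral_condExp (hB2 α) hGh hD]
  refine integral_congr_ae (ae_restrict_of_ae ?_)
  exact (condExp_mul_of_stronglyMeasurable_left hGm hGh hhi).symm

/-- Lemma 2.10 of Kurtz: pointwise uniqueness for jointly `C`-compatible solutions in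
`S_{Γ,C,ν}` is equivalent to pointwise uniqueness in `S_{Γ,C,ν}`. -/
theorem stmt9
    {S1 S2 : Type} [mS1 : MeasurableSpace S1] [TopologicalSpace S1] [PolishSpace S1] [BorelSpace S1]
    [mS2 : MeasurableSpace S2] [TopologicalSpace S2] [PolishSpace S2] [BorelSpace S2]
    (ν : Measure S2) [IsProbabilityMeasure ν]
    {A : Type}
    (B1 : A → MeasurableSpace S1) (hB1 : ∀ α, B1 α ≤ mS1)
    (B2 : A → MeasurableSpace S2) (hB2 : ∀ α, B2 α ≤ mS2)
    (S : Set (Measure (S1 × S2)))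
    -- every member of S is a joint solution measure: a probability measure with
    -- S2-marginal ν whose canonical pair (fst, snd) is C-compatible
    (hS : ∀ μ ∈ S, IsProbabilityMeasure μ ∧ μ.map Prod.snd = ν ∧
      CompatiblePair μ B1 B2 (Prod.fst : S1 × S2 → S1) (Prod.snd : S1 × S2 → S2)) :
    (∀ (Ω : Type) (mΩ : MeasurableSpace Ω) (P : Measure Ω), IsProbabilityMeasure P →
      ∀ (X1 X2 : Ω → S1) (Y : Ω → S2), Measurable X1 → Measurable X2 → Measurable Y →
        P.map (fun ω => (X1 ω, Y ω)) ∈ S → P.map (fun ω => (X2 ω, Y ω)) ∈ S →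
        JointlyCompatible P B1 B2 X1 X2 Y →
        X1 =ᵐ[P] X2)
    ↔ (∀ (Ω : Type) (mΩ : MeasurableSpace Ω) (P : Measure Ω), IsProbabilityMeasure P →
      ∀ (X1 X2 : Ω → S1) (Y : Ω → S2), Measurable X1 → Measurable X2 → Measurable Y →
        P.map (fun ω => (X1 ω, Y ω)) ∈ S → P.map (fun ω => (X2 ω, Y ω)) ∈ S →
        X1 =ᵐ[P] X2) := by
  constructor
  swap
  · intro H Ω mΩ P hP X1 X2 Y hX1 hX2 hY hm1 hm2 _
    exact H Ω mΩ P hP X1 X2 Y hX1 hX2 hY hm1 hm2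
  intro H Ω mΩ P hP X1 X2 Y hX1 hX2 hY hm1 hm2
  have hΩ : Nonempty Ω := nonempty_of_isProbabilityMeasure P
  have : Nonempty S1 := hΩ.map X1
  obtain ⟨p1, n1, c1⟩ := hS _ hm1
  obtain ⟨p2, n2, c2⟩ := hS _ hm2
  have hYν : P.map Y = ν := by
    rw [← n1, Measure.map_map measurable_snd (hX1.prodMk hY)]
    rfl
  set κ1 := condDistrib X1 Y P with hκ1
  set κ2 := condDistrib X2 Y P with hκ2
  have d1 : ν ⊗ₘ κ1 = P.map (fun ω => (Y ω, X1 ω)) := by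
    rw [← hYν, hκ1, compProd_map_condDistrib hX1.aemeasurable]
  have d2 : ν ⊗ₘ κ2 = P.map (fun ω => (Y ω, X2 ω)) := by
    rw [← hYν, hκ2, compProd_map_condDistrib hX2.aemeasurable]
  have q1 := aux_compat ν B1 hB1 B2 hB2 _ n1 c1 κ1
    (by rw [d1, Measure.map_map measurable_swap (hX1.prodMk hY)]; rfl)
  have q2 := aux_compat ν B1 hB1 B2 hB2 _ n2 c2 κ2
    (by rw [d2, Measure.map_map measurable_swap (hX2.prodMk hY)]; rfl)
  have hJ := aux_joint ν B1 hB1 B2 hB2 κ1 κ2 q1 q2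
  have l1 : (ν ⊗ₘ (κ1 ×ₖ κ2)).map (fun p : S2 × S1 × S1 => (p.2.1, p.1))
      = P.map (fun ω => (X1 ω, Y ω)) := by
    refine Measure.ext_prod fun {s t} hs ht => ?_
    have e : (fun p : S2 × S1 × S1 => (p.2.1, p.1)) ⁻¹' (s ×ˢ t) = t ×ˢ (s ×ˢ Set.univ) := by
      ext p; simp [and_comm]
    have e' : (fun ω => (X1 ω, Y ω)) ⁻¹' (s ×ˢ t) = (fun ω => (Y ω, X1 ω)) ⁻¹' (t ×ˢ s) := by
      ext p; simp [and_comm]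
    rw [Measure.map_apply (by fun_prop) (hs.prod ht), e,
      Measure.compProd_apply_prod ht (hs.prod MeasurableSet.univ),
      Measure.map_apply (by fun_prop) (hs.prod ht), e',
      ← Measure.map_apply (by fun_prop) (ht.prod hs), ← d1, Measure.compProd_apply_prod ht hs]
    simp [Kernel.prod_apply_prod]
  have l2 : (ν ⊗ₘ (κ1 ×ₖ κ2)).map (fun p : S2 × S1 × S1 => (p.2.2, p.1))
      = P.map (fun ω => (X2 ω, Y ω)) := by
    refine Measure.ext_prod fun {s t} hs ht => ?_
    have e : (fun p : S2 × S1 × S1 => (p.2.2, p.1)) ⁻¹' (s ×ˢ t) = t ×ˢ (Set.univ ×ˢ s) := by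
      ext p; simp [and_comm]
    have e' : (fun ω => (X2 ω, Y ω)) ⁻¹' (s ×ˢ t) = (fun ω => (Y ω, X2 ω)) ⁻¹' (t ×ˢ s) := by
      ext p; simp [and_comm]
    rw [Measure.map_apply (by fun_prop) (hs.prod ht), e,
      Measure.compProd_apply_prod ht (MeasurableSet.univ.prod hs),
      Measure.map_apply (by fun_prop) (hs.prod ht), e',
      ← Measure.map_apply (by fun_prop) (ht.prod hs), ← d2, Measure.compProd_apply_prod ht hs]
    simp [Kernel.prod_apply_prod]
  have hE := H _ _ (ν ⊗ₘ (κ1 ×ₖ κ2)) inferInstance (fun p => p.2.1) (fun p => p.2.2)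
    (fun p => p.1) (by fun_prop) (by fun_prop) (by fun_prop) (by rw [l1]; exact hm1)
    (by rw [l2]; exact hm2) hJ
  -- product of kernels vanishes on B × Bᶜ
  have hz : ∀ B : Set S1, MeasurableSet B → ∀ᵐ y ∂ν, κ1 y B = 0 ∨ κ2 y Bᶜ = 0 := by
    intro B hB
    have h0 : (ν ⊗ₘ (κ1 ×ₖ κ2)) (Set.univ ×ˢ (B ×ˢ Bᶜ)) = 0 := by
      refine measure_mono_null ?_ (ae_iff.1 hE)
      rintro ⟨y, a, b⟩ ⟨-, ha, hb⟩ hab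
      exact hb (by have hab' : a = b := hab
                   exact hab' ▸ ha)
    rw [Measure.compProd_apply_prod MeasurableSet.univ (hB.prod hB.compl), setLIntegral_univ,
      lintegral_eq_zero_iff ((κ1 ×ₖ κ2).measurable_coe (hB.prod hB.compl))] at h0
    filter_upwards [h0] with y hy
    rw [Kernel.prod_apply_prod] at hy
    exact mul_eq_zero.1 hy
  have half : ∀ B : Set S1, MeasurableSet B → P (X1 ⁻¹' B ∩ X2 ⁻¹' Bᶜ) = 0 := by
    intro B hB
    set D : Set S2 := {y | κ1 y B = 0} with hD
    have mD : MeasurableSet D := κ1.measurable_coe hB (measurableSet_singleton 0)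
    have b1 : P ((fun ω => (Y ω, X1 ω)) ⁻¹' (D ×ˢ B)) = 0 := by
      rw [← Measure.map_apply (by fun_prop) (mD.prod hB), ← d1,
        Measure.compProd_apply_prod mD hB]
      exact (setLIntegral_congr_fun mD (fun y hy => hy)).trans lintegral_zero
    have b2 : P ((fun ω => (Y ω, X2 ω)) ⁻¹' (Dᶜ ×ˢ Bᶜ)) = 0 := by
      rw [← Measure.map_apply (by fun_prop) (mD.compl.prod hB.compl), ← d2,
        Measure.compProd_apply_prod mD.compl hB.compl]
      rw [setLIntegral_congr_fun_ae (g := fun _ => 0) mD.compl, lintegral_zero]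
      filter_upwards [hz B hB] with y hy hyD
      exact hy.resolve_left hyD
    refine measure_mono_null ?_ (measure_union_null b1 b2)
    rintro ω ⟨hω1, hω2⟩
    by_cases hω : Y ω ∈ D
    · exact Or.inl ⟨hω, hω1⟩
    · exact Or.inr ⟨hω, hω2⟩
  refine Filter.EventuallyEq.of_forall_separating_preimage MeasurableSet fun B hB => ?_
  have a1 := half B hB
  have a2 := half Bᶜ hB.compl
  rw [measure_eq_zero_iff_ae_notMem] at a1 a2
  rw [Filter.eventuallyEq_set]
  filter_upwards [a1, a2] with ω h1 h2
  simp only [Set.mem_inter_iff, Set.mem_preimage, Set.mem_compl_iff, not_not] at h1 h2 ⊢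
  tauto
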